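/- Let 𝐅 = (F_1,…,F_d) ∈ F_d^0 and let C ∈ C^OS(𝐅) be absolutely continuous. Then the density of C vanishes almost everywhere on [0,1]^d ∖ T^𝐅, where T^𝐅 = {u = (u_1,…,u_d) ∈ [0,1]^d : F_1^{-1}(u_1) ≤ ⋯ ≤ F_d^{-1}(u_d)}. -/

import Mathlib

/-! Let `C` be the law of `(F_1(X_1), …, F_d(X_d))` with `X` almost surely nondecreasing.  Almost
surely `X_i` does not lie on a flat piece of `F_i` extending to its left, hence
`F_i^{-1}(F_i(X_i)) = X_i`.  The quantiles of a `C`-distributed vector are thus almost surely the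
coordinates of `X`, so that `C` is carried by `T^F`. -/

/- Formalization framework for "Maximum entropy distribution of order statistics with given
marginals" (Butucea, Delmas, Dutfoy, Fischer).  One-dimensional cdfs are identified with
(probability) measures on `ℝ`, and cdfs on `ℝ^d` with measures on `Fin d → ℝ`. -/

open MeasureTheory Set
open scoped ENNReal

noncomputable section

namespace MaxEntOS

variable {d : ℕ}

/-- The cumulative distribution function of a measure on `ℝ`. -/
def cdf1 (ν : Measure ℝ) (t : ℝ) : ℝ := (ν (Iic t)).toReal

/-- The cdf extended to `EReal` arguments (so that `cdfE ν ⊥ = 0` and `cdfE ν ⊤ = ν ℝ`). -/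
def cdfE (ν : Measure ℝ) (x : EReal) : ℝ := (ν {s : ℝ | (s : EReal) ≤ x}).toReal

/-- The generalized inverse (quantile function) of the cdf of `ν`, real-valued. -/
def qReal (ν : Measure ℝ) (t : ℝ) : ℝ := sInf {s : ℝ | t ≤ cdf1 ν s}

/-- The generalized inverse of a nondecreasing function `g : ℝ → ℝ`, `EReal`-valued, with the
conventions `inf ∅ = ⊤` and `inf ℝ = ⊥`. -/
def qInvE (g : ℝ → ℝ) (t : ℝ) : EReal := sInf ((fun s : ℝ => (s : EReal)) '' {s : ℝ | t ≤ g s})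

open scoped Classical in
/-- The differential entropy (with respect to Lebesgue measure) of a measure, with values in
`EReal` : it equals `⊥` if the measure is not absolutely continuous, and otherwise it is
`−∫ f log f`, computed as the difference of the lower integrals of the negative and positive
parts of `f log f`, where `f` is the density. -/
def dEntropy {α : Type*} [MeasureSpace α] (μ : Measure α) : EReal :=
  if μ ≪ (volume : Measure α) then
    ((∫⁻ x, ENNReal.ofReal
        (-((μ.rnDeriv volume x).toReal * Real.log ((μ.rnDeriv volume x).toReal))) : ℝ≥0∞) : EReal)
      - ((∫⁻ x, ENNReal.ofReal
        ((μ.rnDeriv volume x).toReal * Real.log ((μ.rnDeriv volume x).toReal)) : ℝ≥0∞) : EReal)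
  else ⊥

/-- The nondecreasing rearrangement (order statistics) of a tuple. -/
def orderStat (x : Fin d → ℝ) : Fin d → ℝ := fun i => x (Tuple.sort x i)

/-- The `i`-th one-dimensional marginal of a measure on `ℝ^d`. -/
def marg (μ : Measure (Fin d → ℝ)) (i : Fin d) : Measure ℝ := μ.map fun x => x i

/-- The multidiagonal of a measure on `ℝ^d` : the tuple of one-dimensional marginals of the
order statistics. -/
def multidiag (μ : Measure (Fin d → ℝ)) (i : Fin d) : Measure ℝ := μ.map fun x => orderStat x i

/-- The uniform distribution on `[0,1]`. -/
def uniform01 : Measure ℝ := (volume : Measure ℝ).restrict (Icc 0 1)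

/-- A copula : a probability measure on `ℝ^d` whose one-dimensional marginals are all uniform
on `[0,1]`. -/
def IsCopula (μ : Measure (Fin d → ℝ)) : Prop :=
  IsProbabilityMeasure μ ∧ ∀ i, marg μ i = uniform01

/-- A measure on `ℝ^d` is symmetric (exchangeable) if it is invariant under permutations of the
coordinates. -/
def IsSymmetric (μ : Measure (Fin d → ℝ)) : Prop :=
  ∀ π : Equiv.Perm (Fin d), μ.map (fun x => fun i => x (π i)) = μ

/-- `δ` belongs to `D` : it is the multidiagonal of some copula. -/
def IsMultidiag (δ : Fin d → Measure ℝ) : Prop :=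
  ∃ μ : Measure (Fin d → ℝ), IsCopula μ ∧ multidiag μ = δ

/-- `δ` belongs to `D^0` : it is the multidiagonal of some absolutely continuous copula. -/
def IsMultidiag0 (δ : Fin d → Measure ℝ) : Prop :=
  ∃ μ : Measure (Fin d → ℝ), IsCopula μ ∧ μ ≪ (volume : Measure (Fin d → ℝ)) ∧ multidiag μ = δ

/-- `F ∈ F_d` : `F` is a `d`-tuple of continuous one-dimensional cdfs (identified with atomless
probability measures on `ℝ`) which are stochastically ordered : `F (i-1) ≥ F i` pointwise. -/
structure IsMargOS [NeZero d] (F : Fin d → Measure ℝ) : Prop where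
  prob : ∀ i, IsProbabilityMeasure (F i)
  cont : ∀ i, ∀ t : ℝ, F i {t} = 0
  ord : ∀ i : Fin d, i ≠ 0 → ∀ t : ℝ, cdf1 (F i) t ≤ cdf1 (F (i - 1)) t

/-- `μ ∈ L^OS_d(F)` : `μ` is the distribution of a `d`-dimensional order statistic (an almost
surely nondecreasing random vector) with one-dimensional marginals `F`. -/
def IsCdfOS (F : Fin d → Measure ℝ) (μ : Measure (Fin d → ℝ)) : Prop :=
  IsProbabilityMeasure μ ∧ μ {x | Monotone x} = 1 ∧ ∀ i, marg μ i = F i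

/-- `F ∈ F_d^0` : there exists an absolutely continuous distribution of order statistics with
one-dimensional marginals `F`. -/
def IsMargOS0 [NeZero d] (F : Fin d → Measure ℝ) : Prop :=
  IsMargOS F ∧ ∃ μ : Measure (Fin d → ℝ), IsCdfOS F μ ∧ μ ≪ (volume : Measure (Fin d → ℝ))

/-- The functional `J(F) = ∑_{i=2}^d ∫ |log (F_{i-1}(t) − F_i(t))| dF_i(t) ∈ [0,∞]`. -/
def Jfun [NeZero d] (F : Fin d → Measure ℝ) : ℝ≥0∞ :=
  ∑ i : Fin d, if i = 0 then 0 else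
    ∫⁻ t, ENNReal.ofReal |Real.log (cdf1 (F (i - 1)) t - cdf1 (F i) t)| ∂(F i)

/-- The copula of a measure on `ℝ^d` (for continuous marginals this is the unique copula
provided by Sklar's theorem) : the law of `(F_1(X_1), …, F_d(X_d))`. -/
def copulaOf (μ : Measure (Fin d → ℝ)) : Measure (Fin d → ℝ) :=
  μ.map fun x => fun i => cdf1 (marg μ i) (x i)

/-- The set `C^{OS}(F)` of copulas of distributions of order statistics with marginal
cdfs `F`. -/
def copulaOS (F : Fin d → Measure ℝ) : Set (Measure (Fin d → ℝ)) :=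
  {C | ∃ μ, IsCdfOS F μ ∧ copulaOf μ = C}

/-- The joint distribution with one-dimensional marginals `F` and copula `C` : the law of
`(F_1^{-1}(U_1), …, F_d^{-1}(U_d))` where `U ∼ C`. -/
def joinCopula (F : Fin d → Measure ℝ) (C : Measure (Fin d → ℝ)) : Measure (Fin d → ℝ) :=
  C.map fun u => fun i => qReal (F i) (u i)

/-- The law of `X_Π`, where `X ∼ μ` and `Π` is an independent uniform random permutation of
`{1, …, d}`. -/
def symmetrize (μ : Measure (Fin d → ℝ)) : Measure (Fin d → ℝ) :=
  (d.factorial : ℝ≥0∞)⁻¹ • ∑ π : Equiv.Perm (Fin d), μ.map (fun x => fun i => x (π i))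

/-- The symmetrizing operator `S_F` on copulas : `S_F(C)` is the copula of `X_Π` where `X` has
one-dimensional marginals `F` and copula `C`, and `Π` is an independent uniform random
permutation. -/
def SF (F : Fin d → Measure ℝ) (C : Measure (Fin d → ℝ)) : Measure (Fin d → ℝ) :=
  copulaOf (symmetrize (joinCopula F C))

/-- The average cdf `G = (1/d) ∑_{i=1}^d F_i`. -/
def Gbar (F : Fin d → Measure ℝ) (t : ℝ) : ℝ := (∑ i, cdf1 (F i) t) / d

/-- `G` extended to `EReal` arguments (`GbarE F ⊥ = 0` and `GbarE F ⊤ = 1` for probability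
measures). -/
def GbarE (F : Fin d → Measure ℝ) (x : EReal) : ℝ := (∑ i, cdfE (F i) x) / d

/-- The multidiagonal `δ^F` associated to the marginals `F`, as a tuple of measures : the law
of `G(X_i)` where `X_i ∼ F_i`, whose cdf is `F_i ∘ G^{-1}`. -/
def mdiagF (F : Fin d → Measure ℝ) (i : Fin d) : Measure ℝ := (F i).map (Gbar F)

/-- `C` is a copula of the measure `ν` on `ℝ^d` : `C` is a copula and `ν` is the joint
distribution with the marginals of `ν` and copula `C`. -/
def IsCopulaOf (C ν : Measure (Fin d → ℝ)) : Prop :=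
  IsCopula C ∧ ν = joinCopula (marg ν) C

/-- The extended tuple of multidiagonal cdfs, with the conventions `δ_(0) = 1` and
`δ_(d+1) = 0`; the natural index `i ∈ {1, …, d}` corresponds to `δ_(i)`. -/
def dcdf (δ : Fin d → Measure ℝ) (i : ℕ) (t : ℝ) : ℝ :=
  if h0 : i = 0 then 1
  else if h : i ≤ d then cdf1 (δ ⟨i - 1, by omega⟩) t
  else 0

/-- The open set `Ψ^δ_i = {t ∈ (0,1) : δ_(i-1)(t) > δ_(i)(t)}`, for `1 ≤ i ≤ d+1`
(with the conventions `δ_(0) = 1` and `δ_(d+1) = 0`). -/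
def Psi (δ : Fin d → Measure ℝ) (i : ℕ) : Set ℝ :=
  Ioo 0 1 ∩ {t | dcdf δ i t < dcdf δ (i - 1) t}

/-- Left endpoint of the connected component of `U` containing `t`. -/
def lend (U : Set ℝ) (t : ℝ) : ℝ := sSup {s | s ≤ t ∧ s ∉ U}

/-- Right endpoint of the connected component of `U` containing `t`. -/
def rend (U : Set ℝ) (t : ℝ) : ℝ := sInf {s | t ≤ s ∧ s ∉ U}

/-- Midpoint `m_i^{(j)}` of the connected component of `U` containing `t`. -/
def midpt (U : Set ℝ) (t : ℝ) : ℝ := (lend U t + rend U t) / 2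

/-- The integrand `δ'_(i)(s) / (δ_(i-1)(s) − δ_(i)(s))` (that is, `K'_i`). -/
def kInt (δ : Fin d → Measure ℝ) (i : ℕ) (s : ℝ) : ℝ :=
  deriv (dcdf δ i) s / (dcdf δ (i - 1) s - dcdf δ i s)

/-- `K_i(t)`, integrating `K'_i` from the midpoint of the connected component of `Ψ^δ_i`
containing `t` (note `K_{d+1} = 0` holds automatically, `δ_(d+1)` being constant). -/
def Kfun (δ : Fin d → Measure ℝ) (i : ℕ) (t : ℝ) : ℝ :=
  ∫ s in (midpt (Psi δ i) t)..t, kInt δ i s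

/-- The function `a_i(t) = K'_i(t) e^{K_{i+1}(t) − K_i(t)} 1_{Ψ^δ_i ∩ Ψ^δ_{i+1}}(t)`. -/
def aFun (δ : Fin d → Measure ℝ) (i : ℕ) : ℝ → ℝ :=
  (Psi δ i ∩ Psi δ (i + 1)).indicator fun t =>
    kInt δ i t * Real.exp (Kfun δ (i + 1) t - Kfun δ i t)

/-- The set `L_δ` of `u ∈ [0,1]^d` such that `(u_(i-1), u_(i)) ⊆ Ψ^δ_i` for all `2 ≤ i ≤ d`. -/
def Lset [NeZero d] (δ : Fin d → Measure ℝ) : Set (Fin d → ℝ) :=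
  {u | (∀ j, u j ∈ Icc (0 : ℝ) 1) ∧
    ∀ i : Fin d, i ≠ 0 → Ioo (orderStat u (i - 1)) (orderStat u i) ⊆ Psi δ (i.val + 1)}

/-- The density `c_δ(u) = (1/d!) 1_{L_δ}(u) ∏_{i=1}^d a_i(u_(i))` of the maximum entropy copula
with multidiagonal `δ`. -/
def cDelta [NeZero d] (δ : Fin d → Measure ℝ) : (Fin d → ℝ) → ℝ :=
  (Lset δ).indicator fun u =>
    (d.factorial : ℝ)⁻¹ * ∏ i : Fin d, aFun δ (i.val + 1) (orderStat u i)

/-- The maximum entropy copula `C_δ` with multidiagonal `δ` : the measure with density `c_δ`. -/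
def CDelta [NeZero d] (δ : Fin d → Measure ℝ) : Measure (Fin d → ℝ) :=
  (volume : Measure (Fin d → ℝ)).withDensity fun u => ENNReal.ofReal (cDelta δ u)

/-- The density of a one-dimensional measure `ν` with respect to Lebesgue measure. -/
def densOf (ν : Measure ℝ) (t : ℝ) : ℝ := (ν.rnDeriv volume t).toReal

/-- The function `ℓ_i(t) = f_i(t) / (F_{i-1}(t) − F_i(t))`. -/
def ellF [NeZero d] (F : Fin d → Measure ℝ) (i : Fin d) (t : ℝ) : ℝ :=
  densOf (F i) t / (cdf1 (F (i - 1)) t - cdf1 (F i) t)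

/-- The set `L^F` of ordered vectors `x ∈ ℝ^d` such that `F_{i-1}(t) > F_i(t)` for all
`t ∈ (x_{i-1}, x_i)` and all `2 ≤ i ≤ d`. -/
def LsetF [NeZero d] (F : Fin d → Measure ℝ) : Set (Fin d → ℝ) :=
  {x | Monotone x ∧ ∀ i : Fin d, i ≠ 0 →
    ∀ t ∈ Ioo (x (i - 1)) (x i), cdf1 (F i) t < cdf1 (F (i - 1)) t}

/-- The density `f_F` of the maximum entropy distribution of order statistics with marginal
cdfs `F` :
`f_F(x) = f_1(x_1) ∏_{i=2}^d ℓ_i(x_i) exp(−∫_{x_{i-1}}^{x_i} ℓ_i(s) ds) 1_{L^F}(x)`. -/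
def fF [NeZero d] (F : Fin d → Measure ℝ) : (Fin d → ℝ) → ℝ :=
  (LsetF F).indicator fun x =>
    densOf (F 0) (x 0) *
      ∏ i ∈ Finset.univ.erase (0 : Fin d),
        ellF F i (x i) * Real.exp (-∫ s in (x (i - 1))..(x i), ellF F i s)

section FlatPieces

variable {α : Type*} [LinearOrder α] [TopologicalSpace α] [OrderTopology α]
  [SecondCountableTopology α] [MeasurableSpace α]

lemma measure_setOf_measure_Ioc_eq_zero (ν : Measure α) (a : α) :
    ν {x | a < x ∧ ν (Ioc a x) = 0} = 0 := by
  by_contra hpos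
  obtain ⟨x, hx, hnhds⟩ := exists_mem_forall_mem_nhdsWithin_pos_measure hpos
  have hmax : ∀ y, a < y ∧ ν (Ioc a y) = 0 → y ≤ x := fun y hy ↦ not_lt.1 fun hxy ↦
    (hnhds _ (mem_nhdsWithin_of_mem_nhds (Ioc_mem_nhds hx.1 hxy))).ne' hy.2
  have hsub : {y | a < y ∧ ν (Ioc a y) = 0} ⊆ Ioc a x := fun y hy ↦ ⟨hy.1, hmax y hy⟩
  exact hpos (measure_mono_null hsub hx.2)

lemma ae_forall_lt_measure_Ioc_ne_zero [DenselyOrdered α] (ν : Measure α) :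
    ∀ᵐ x ∂ν, ∀ y < x, ν (Ioc y x) ≠ 0 := by
  obtain ⟨D, hD, hDdense⟩ := TopologicalSpace.exists_countable_dense α
  have hflat : ∀ᵐ x ∂ν, ∀ a ∈ D, x ∉ {x | a < x ∧ ν (Ioc a x) = 0} :=
    (ae_ball_iff hD).2 fun a _ ↦
      measure_eq_zero_iff_ae_notMem.1 (measure_setOf_measure_Ioc_eq_zero ν a)
  filter_upwards [hflat] with x hx y hyx hzero
  obtain ⟨a, haD, hya, hax⟩ := hDdense.exists_between hyx
  exact hx a haD ⟨hax, measure_mono_null (Ioc_subset_Ioc_left hya.le) hzero⟩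

end FlatPieces

-- On the order-connected set of levels whose superlevel set is nonempty and bounded below, the
-- infimum is monotone; at every other level it has the junk value `sInf ∅`.
lemma measurable_sInf_setOf_le {α β : Type*} [ConditionallyCompleteLinearOrder α]
    [TopologicalSpace α] [OrderTopology α] [SecondCountableTopology α] [MeasurableSpace α]
    [BorelSpace α] [LinearOrder β] [TopologicalSpace β] [OrderClosedTopology β]
    [MeasurableSpace β] [BorelSpace β] (g : α → β) :
    Measurable fun t ↦ sInf {s | t ≤ g s} := by
  let A : Set β := {t | {s | t ≤ g s}.Nonempty ∧ BddBelow {s | t ≤ g s}}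
  have hanti {t t' : β} (htt' : t ≤ t') : {s | t' ≤ g s} ⊆ {s | t ≤ g s} :=
    fun _ hs ↦ htt'.trans hs
  have hA : A.OrdConnected := ⟨fun _ ht _ ht' _ hr ↦
    ⟨ht'.1.mono (hanti hr.2), ht.2.mono (hanti hr.1)⟩⟩
  refine measurable_of_restrict_of_restrict_compl hA.measurableSet ?_ ?_
  · exact Monotone.measurable fun t t' htt' ↦ csInf_le_csInf t.2.2 t'.2.1 (hanti htt')
  · convert (measurable_const : Measurable fun _ : ↥Aᶜ ↦ sInf (∅ : Set α)) using 2 with t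
    by_cases hne : {s | (t : β) ≤ g s}.Nonempty
    · exact csInf_of_not_bddBelow fun hbdd ↦ t.2 ⟨hne, hbdd⟩
    · exact congrArg sInf (not_nonempty_iff_eq_empty.1 hne)

lemma ae_rnDeriv_eq_zero_of_ae_mem {α : Type*} [MeasurableSpace α] {μ ν : Measure α} {T : Set α}
    (hT : ∀ᵐ x ∂μ, x ∈ T) : ∀ᵐ x ∂ν, x ∉ T → μ.rnDeriv ν x = 0 := by
  have hdensity : ∀ᵐ x ∂ν, μ.rnDeriv ν x ≠ 0 → x ∈ T :=
    (ae_withDensity_iff (Measure.measurable_rnDeriv μ ν)).1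
      (ae_mono (Measure.withDensity_rnDeriv_le μ ν) hT)
  filter_upwards [hdensity] with x hx
  exact not_imp_comm.1 hx

lemma cdf1_add_measureReal_Ioc (ν : Measure ℝ) [IsFiniteMeasure ν] {s t : ℝ} (hst : s ≤ t) :
    cdf1 ν s + ν.real (Ioc s t) = cdf1 ν t := by
  simp only [cdf1, ← measureReal_def]
  rw [← measureReal_union (Iic_disjoint_Ioc le_rfl) measurableSet_Ioc, Iic_union_Ioc_eq_Iic hst]

lemma cdf1_mono (ν : Measure ℝ) [IsFiniteMeasure ν] : Monotone (cdf1 ν) := fun _ _ hst ↦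
  measureReal_mono (Iic_subset_Iic.2 hst)

lemma cdf1_mem_Icc (ν : Measure ℝ) [IsProbabilityMeasure ν] (t : ℝ) :
    cdf1 ν t ∈ Icc (0 : ℝ) 1 :=
  ⟨measureReal_nonneg, measureReal_le_one⟩

lemma ae_forall_lt_cdf1_lt (ν : Measure ℝ) [IsFiniteMeasure ν] :
    ∀ᵐ x ∂ν, ∀ y < x, cdf1 ν y < cdf1 ν x := by
  filter_upwards [ae_forall_lt_measure_Ioc_ne_zero ν] with x hx y hyx
  have hpos : 0 < ν.real (Ioc y x) := ENNReal.toReal_pos (hx y hyx) (measure_ne_top ν _)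
  linarith [cdf1_add_measureReal_Ioc ν hyx.le]

lemma measurable_qReal (ν : Measure ℝ) : Measurable (qReal ν) :=
  measurable_sInf_setOf_le (cdf1 ν)

lemma ae_qReal_cdf1 (ν : Measure ℝ) [IsFiniteMeasure ν] : ∀ᵐ x ∂ν, qReal ν (cdf1 ν x) = x := by
  filter_upwards [ae_forall_lt_cdf1_lt ν] with x hx
  have hIci : {s | cdf1 ν x ≤ cdf1 ν s} = Ici x := by
    ext s
    exact ⟨fun hs ↦ not_lt.1 fun hsx ↦ (hx s hsx).not_ge hs, fun hs ↦ cdf1_mono ν hs⟩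
  rw [qReal, hIci, csInf_Ici]

/-- The set `T^F` of points of the unit cube whose tuple of `F`-quantiles is nondecreasing; it
carries every copula of order statistics with marginals `F`.  Quantiles are real-valued, so an
infinite quantile, at level `0` or `1`, is replaced by the junk value `0`. -/
def quantileOrderedSet {ι : Type*} [Preorder ι] (F : ι → Measure ℝ) : Set (ι → ℝ) :=
  {u | (∀ j, u j ∈ Icc (0 : ℝ) 1) ∧ Monotone fun i ↦ qReal (F i) (u i)}

lemma measurableSet_quantileOrderedSet {ι : Type*} [Preorder ι] [Countable ι]
    (F : ι → Measure ℝ) : MeasurableSet (quantileOrderedSet F) := by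
  have hquantiles : Measurable fun (u : ι → ℝ) i ↦ qReal (F i) (u i) :=
    measurable_pi_lambda _ fun i ↦ (measurable_qReal (F i)).comp (measurable_pi_apply i)
  have hcube : MeasurableSet {u : ι → ℝ | ∀ j, u j ∈ Icc (0 : ℝ) 1} := by
    simpa only [pi, mem_univ, forall_const] using
      MeasurableSet.univ_pi fun _ : ι ↦ (measurableSet_Icc : MeasurableSet (Icc (0 : ℝ) 1))
  exact hcube.inter (hquantiles isClosed_monotone.measurableSet)

lemma ae_copulaOf_mem_quantileOrderedSet (μ : Measure (Fin d → ℝ)) [IsProbabilityMeasure μ]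
    (hmono : ∀ᵐ x ∂μ, Monotone x) :
    ∀ᵐ u ∂(copulaOf μ), u ∈ quantileOrderedSet (marg μ) := by
  have hprob (i : Fin d) : IsProbabilityMeasure (marg μ i) :=
    Measure.isProbabilityMeasure_map (measurable_pi_apply i).aemeasurable
  have hcdf : Measurable fun (x : Fin d → ℝ) i ↦ cdf1 (marg μ i) (x i) :=
    measurable_pi_lambda _ fun i ↦ (cdf1_mono _).measurable.comp (measurable_pi_apply i)
  have hquantile : ∀ᵐ x ∂μ, ∀ i, qReal (marg μ i) (cdf1 (marg μ i) (x i)) = x i :=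
    ae_all_iff.2 fun i ↦
      ae_of_ae_map (measurable_pi_apply i).aemeasurable (ae_qReal_cdf1 (marg μ i))
  refine (ae_map_iff hcdf.aemeasurable (measurableSet_quantileOrderedSet _)).2 ?_
  filter_upwards [hmono, hquantile] with x hx hq
  exact ⟨fun i ↦ cdf1_mem_Icc _ _, by simpa only [hq] using hx⟩

lemma ae_mem_quantileOrderedSet_of_mem_copulaOS {F : Fin d → Measure ℝ}
    {C : Measure (Fin d → ℝ)} (hC : C ∈ copulaOS F) : ∀ᵐ u ∂C, u ∈ quantileOrderedSet F := by
  obtain ⟨μ, ⟨hprob, hmono, hmarg⟩, rfl⟩ := hC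
  obtain rfl : marg μ = F := funext hmarg
  exact ae_copulaOf_mem_quantileOrderedSet μ
    ((mem_ae_iff_prob_eq_one isClosed_monotone.measurableSet).2 hmono)

theorem stmt_14_general {F : Fin d → Measure ℝ} {C : Measure (Fin d → ℝ)} (hC : C ∈ copulaOS F) :
    ∀ᵐ u ∂(volume : Measure (Fin d → ℝ)), u ∉ quantileOrderedSet F → C.rnDeriv volume u = 0 :=
  ae_rnDeriv_eq_zero_of_ae_mem (ae_mem_quantileOrderedSet_of_mem_copulaOS hC)

/-- Lemma `lem:c_support`.  Let `F = (F_1, …, F_d) ∈ F_d^0` and let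
`C ∈ C^OS(F)` be absolutely continuous.  Then the density of `C` vanishes almost everywhere
outside `T^F = {u ∈ [0,1]^d : F_1^{-1}(u_1) ≤ ⋯ ≤ F_d^{-1}(u_d)}`. -/
theorem stmt_14 {d : ℕ} [NeZero d] (F : Fin d → Measure ℝ) (hF : IsMargOS0 F)
    (C : Measure (Fin d → ℝ)) (hC : C ∈ copulaOS F)
    (hac : C ≪ (volume : Measure (Fin d → ℝ))) :
    ∀ᵐ u ∂(volume : Measure (Fin d → ℝ)),
      u ∉ {u : Fin d → ℝ | (∀ j, u j ∈ Icc (0 : ℝ) 1) ∧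
        Monotone fun i => qReal (F i) (u i)} →
      C.rnDeriv volume u = 0 :=
  stmt_14_general hC

end MaxEntOS
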